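/- arXiv:1504.03257 — 2 statements merged into one kernel-verified Lean document; each statement's English description precedes it below -/
import Mathlib

section
/- If a mechanism φ is ex-ante stable, then φ is interim stable; moreover, if φ is ex-ante pairwise stable, then φ is interim pairwise stable. -/
open scoped ENNReal

namespace Unraveling

variable (M W : Type*) [Fintype M] [DecidableEq M] [Fintype W] [DecidableEq W]

/-- A matching between men `M` and women `W`.  `Sum.inl m` denotes man `m`,
`Sum.inr w` denotes woman `w`; `toFun a = a` means agent `a` is unmatched. -/
structure Matching where
  toFun : M ⊕ W → M ⊕ W
  man_range : ∀ m : M, toFun (Sum.inl m) = Sum.inl m ∨ ∃ w : W, toFun (Sum.inl m) = Sum.inr w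
  woman_range : ∀ w : W, toFun (Sum.inr w) = Sum.inr w ∨ ∃ m : M, toFun (Sum.inr w) = Sum.inl m
  mutual_cond : ∀ (m : M) (w : W), toFun (Sum.inl m) = Sum.inr w ↔ toFun (Sum.inr w) = Sum.inl m

/-- A preference profile: each man has a ranking (a bijection onto `{1,…,|W|+1}`,
encoded as an `Equiv` onto `Fin (|W|+1)`) of the women together with the option
(`none`) of remaining unmatched, and symmetrically for women. -/
structure Profile where
  mpref : M → (Option W ≃ Fin (Fintype.card W + 1))
  wpref : W → (Option M ≃ Fin (Fintype.card M + 1))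

variable {M W}

/-- The partner of man `m` under matching `μ` (`none` if unmatched). -/
def Matching.partnerM (μ : Matching M W) (m : M) : Option W :=
  match μ.toFun (Sum.inl m) with
  | Sum.inl _ => none
  | Sum.inr w => some w

/-- The partner of woman `w` under matching `μ` (`none` if unmatched). -/
def Matching.partnerW (μ : Matching M W) (w : W) : Option M :=
  match μ.toFun (Sum.inr w) with
  | Sum.inr _ => none
  | Sum.inl m => some m

/-- The rank (`1` = most preferred) that man `m` assigns to `o` under profile `P`. -/
def mrank (P : Profile M W) (m : M) (o : Option W) : ℕ := (P.mpref m o : ℕ) + 1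

/-- The rank (`1` = most preferred) that woman `w` assigns to `o` under profile `P`. -/
def wrank (P : Profile M W) (w : W) (o : Option M) : ℕ := (P.wpref w o : ℕ) + 1

/-- The rank that agent `a` assigns to his/her partner under matching `μ`. -/
def prank (P : Profile M W) (μ : Matching M W) : M ⊕ W → ℕ
  | Sum.inl m => mrank P m (μ.partnerM m)
  | Sum.inr w => wrank P w (μ.partnerW w)

/-- The rank that agent `a` assigns to remaining unmatched. -/
def urank (P : Profile M W) : M ⊕ W → ℕ
  | Sum.inl m => mrank P m none
  | Sum.inr w => wrank P w none

/-- Stability of a matching at a profile. -/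
def IsStable (P : Profile M W) (μ : Matching M W) : Prop :=
  (∀ a : M ⊕ W, prank P μ a ≤ urank P a) ∧
  (∀ (m : M) (w : W), mrank P m (some w) < prank P μ (Sum.inl m) →
     prank P μ (Sum.inr w) < wrank P w (some m))

/-- A mechanism maps each preference profile to a probability distribution over matchings. -/
abbrev Mechanism (M W : Type*) [Fintype M] [DecidableEq M] [Fintype W] [DecidableEq W] :=
  Profile M W → PMF (Matching M W)

/-- The probability that `p` assigns to the set `s`. -/
noncomputable def prob {α : Type*} (p : PMF α) (s : Set α) : ℝ≥0∞ :=
  ∑' x, s.indicator (fun y => p y) x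

/-- CDF of the rank that agent `a` assigns to his/her random partner, when the
matching is drawn from `p` and the profile is `P`. -/
noncomputable def cdfAt (P : Profile M W) (p : PMF (Matching M W)) (a : M ⊕ W) (n : ℕ) : ℝ≥0∞ :=
  prob p {μ | prank P μ a ≤ n}

/-- `SD F G` : the rank distribution with CDF `F` strictly first-order
stochastically dominates the one with CDF `G`. -/
def SD (F G : ℕ → ℝ≥0∞) : Prop := (∀ n, G n ≤ F n) ∧ ∃ n, G n < F n

/-- A coalition consisting of at most one man and at most one woman. -/
def IsPairCoalition (A' : Set (M ⊕ W)) : Prop :=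
  {m : M | Sum.inl m ∈ A'}.Subsingleton ∧ {w : W | Sum.inr w ∈ A'}.Subsingleton

/-- Coalition `A'` blocks mechanism `φ` ex-post at profile `P`. -/
def BlocksExPost (A' : Set (M ⊕ W)) (φ : Mechanism M W) (P : Profile M W) : Prop :=
  A'.Nonempty ∧ ∃ φ' : Mechanism M W,
    (∀ a ∈ A', prob (φ' P) {μ | μ.toFun a ∈ A'} = 1) ∧
    (∀ a ∈ A', SD (cdfAt P (φ' P) a) (cdfAt P (φ P) a))

def ExPostStable (φ : Mechanism M W) : Prop :=
  ∀ (P : Profile M W) (A' : Set (M ⊕ W)), ¬ BlocksExPost A' φ P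

def ExPostPairwiseStable (φ : Mechanism M W) : Prop :=
  ∀ (P : Profile M W) (A' : Set (M ⊕ W)), IsPairCoalition A' → ¬ BlocksExPost A' φ P

/-- Ex-ante CDF of the rank of agent `a`'s partner under mechanism `φ`, when
the profile is drawn from prior `ψ`. -/
noncomputable def cdfExAnte (ψ : PMF (Profile M W)) (φ : Mechanism M W) (a : M ⊕ W) (n : ℕ) : ℝ≥0∞ :=
  ∑' P, ψ P * cdfAt P (φ P) a n

/-- Coalition `A'` blocks mechanism `φ` ex-ante at prior `ψ`. -/
def BlocksExAnte (A' : Set (M ⊕ W)) (φ : Mechanism M W) (ψ : PMF (Profile M W)) : Prop :=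
  A'.Nonempty ∧ ∃ φ' : Mechanism M W,
    (∀ a ∈ A', (∑' P, ψ P * prob (φ' P) {μ | μ.toFun a ∈ A'}) = 1) ∧
    (∀ a ∈ A', SD (cdfExAnte ψ φ' a) (cdfExAnte ψ φ a))

def ExAnteStableAt (φ : Mechanism M W) (ψ : PMF (Profile M W)) : Prop :=
  ∀ A' : Set (M ⊕ W), ¬ BlocksExAnte A' φ ψ

def ExAnteStable (φ : Mechanism M W) : Prop := ∀ ψ, ExAnteStableAt φ ψ

def ExAntePairwiseStable (φ : Mechanism M W) : Prop :=
  ∀ (ψ : PMF (Profile M W)) (A' : Set (M ⊕ W)), IsPairCoalition A' → ¬ BlocksExAnte A' φ ψ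

/-- `prefEq P P' a` : profiles `P` and `P'` give agent `a` the same preferences. -/
def prefEq (P P' : Profile M W) : M ⊕ W → Prop
  | Sum.inl m => P.mpref m = P'.mpref m
  | Sum.inr w => P.wpref w = P'.wpref w

/-- The event `Y_a(P̃_a)`: profiles in which `a`'s preferences agree with `Pt`
and every other member of the coalition `A'` has preferences in his/her
acceptance set `R`. -/
def interimEvent (A' : Set (M ⊕ W)) (R : (M ⊕ W) → Set (Profile M W)) (a : M ⊕ W)
    (Pt : Profile M W) : Set (Profile M W) :=
  {P | prefEq P Pt a ∧ ∀ a' ∈ A', a' ≠ a → P ∈ R a'}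

/-- CDF of the rank of `a`'s partner under `φ`, with the profile drawn from `ψ`
conditioned on the event `Y`. -/
noncomputable def cdfCond (ψ : PMF (Profile M W)) (Y : Set (Profile M W)) (φ : Mechanism M W)
    (a : M ⊕ W) (n : ℕ) : ℝ≥0∞ :=
  (∑' P, Y.indicator (fun P' => ψ P' * cdfAt P' (φ P') a n) P) / prob ψ Y

/-- Coalition `A'` blocks mechanism `φ` in the interim at prior `ψ`.  Each `R a`
is the set of profiles in which `a`'s preferences are ones at which `a` agrees to
deviate; it is required to depend only on `a`'s own preferences. -/
def BlocksInterim (A' : Set (M ⊕ W)) (φ : Mechanism M W) (ψ : PMF (Profile M W)) : Prop :=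
  A'.Nonempty ∧ ∃ (φ' : Mechanism M W) (R : (M ⊕ W) → Set (Profile M W)),
    (∀ (a : M ⊕ W) (P P' : Profile M W), prefEq P P' a → (P ∈ R a ↔ P' ∈ R a)) ∧
    (∀ a ∈ A', ∀ P : Profile M W, prob (φ' P) {μ | μ.toFun a ∈ A'} = 1) ∧
    (∀ a ∈ A', ∀ Pt : Profile M W,
      Pt ∈ R a ↔ (0 < prob ψ (interimEvent A' R a Pt) ∧
        SD (cdfCond ψ (interimEvent A' R a Pt) φ' a)
           (cdfCond ψ (interimEvent A' R a Pt) φ a))) ∧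
    0 < prob ψ {P | ∀ a ∈ A', P ∈ R a}

def InterimStableAt (φ : Mechanism M W) (ψ : PMF (Profile M W)) : Prop :=
  ∀ A' : Set (M ⊕ W), ¬ BlocksInterim A' φ ψ

def InterimStable (φ : Mechanism M W) : Prop := ∀ ψ, InterimStableAt φ ψ

def InterimPairwiseStable (φ : Mechanism M W) : Prop :=
  ∀ (ψ : PMF (Profile M W)) (A' : Set (M ⊕ W)), IsPairCoalition A' → ¬ BlocksInterim A' φ ψ

/-- `MRanks P m rw ru` : man `m` assigns rank `rw w` to each woman `w` and
rank `ru` to remaining unmatched. -/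
def MRanks (P : Profile M W) (m : M) (rw : W → ℕ) (ru : ℕ) : Prop :=
  (∀ w, mrank P m (some w) = rw w) ∧ mrank P m none = ru

/-- `WRanks P w rm ru` : woman `w` assigns rank `rm m` to each man `m` and
rank `ru` to remaining unmatched. -/
def WRanks (P : Profile M W) (w : W) (rm : M → ℕ) (ru : ℕ) : Prop :=
  (∀ m, wrank P w (some m) = rm m) ∧ wrank P w none = ru

instance (P : Profile M W) (m : M) (rw : W → ℕ) (ru : ℕ) : Decidable (MRanks P m rw ru) :=
  decidable_of_iff ((∀ w, mrank P m (some w) = rw w) ∧ mrank P m none = ru) Iff.rfl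

instance (P : Profile M W) (w : W) (rm : M → ℕ) (ru : ℕ) : Decidable (WRanks P w rm ru) :=
  decidable_of_iff ((∀ m, wrank P w (some m) = rm m) ∧ wrank P w none = ru) Iff.rfl

/-- The perfect matching induced by a bijection `e : M ≃ W`. -/
def matchingOf (e : M ≃ W) : Matching M W where
  toFun a :=
    match a with
    | Sum.inl m => Sum.inr (e m)
    | Sum.inr w => Sum.inl (e.symm w)
  man_range m := Or.inr ⟨e m, rfl⟩
  woman_range w := Or.inr ⟨e.symm w, rfl⟩
  mutual_cond m w := by
    constructor
    · intro h
      simp only [Sum.inr.injEq] at h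
      simp [← h]
    · intro h
      simp only [Sum.inl.injEq] at h
      simp [← h]

/-- `P'` is the permutation of profile `P` obtained by (`σM`, `σW`):
`P_a(a') = P'_{σ(a)}(σ(a'))` for all agents `a` and all `a'` in the domain of `P_a`. -/
def IsPermutedProfile (σM : Equiv.Perm M) (σW : Equiv.Perm W) (P P' : Profile M W) : Prop :=
  (∀ m w, P'.mpref (σM m) (some (σW w)) = P.mpref m (some w)) ∧
  (∀ m, P'.mpref (σM m) none = P.mpref m none) ∧
  (∀ w m, P'.wpref (σW w) (some (σM m)) = P.wpref w (some m)) ∧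
  (∀ w, P'.wpref (σW w) none = P.wpref w none)

/-- Probability (jointly over the profile drawn from `ψ` and the internal
randomization of `φ`) that agent `a` is assigned a partner of rank exactly `k`. -/
noncomputable def probRankEq (ψ : PMF (Profile M W)) (φ : Mechanism M W) (a : M ⊕ W) (k : ℕ) : ℝ≥0∞ :=
  ∑' P, ψ P * prob (φ P) {μ | prank P μ a = k}

/-- CDF of a distribution on ranks `{1,2,3}` with probabilities `q1`, `q2`, `q3`. -/
def cdf3 (q1 q2 q3 : ℝ) (n : ℕ) : ℝ :=
  (if 1 ≤ n then q1 else 0) + (if 2 ≤ n then q2 else 0) + (if 3 ≤ n then q3 else 0)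

/-- Strict first-order stochastic dominance for real-valued rank CDFs. -/
def SDR (F G : ℕ → ℝ) : Prop := (∀ n, G n ≤ F n) ∧ ∃ n, G n < F n

end Unraveling

namespace Unraveling

variable {M W : Type*} [Fintype M] [DecidableEq M] [Fintype W] [DecidableEq W]

/-! Suppose a coalition blocks in the interim at the prior `ψ`.  Condition `ψ` on the event that
every member's preferences are ones at which that member agrees to deviate.  From the point of view
of a member `a`, this event is the disjoint union, over the preference relations at which `a`
agrees, of exactly the events on which `a` conditions in the interim.  The deviation improves `a`'s
rank distribution on each of them, hence on average, so the coalition blocks ex-ante at the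
conditioned prior. -/

theorem prob_le_one {α : Type*} (p : PMF α) (s : Set α) : prob p s ≤ 1 := by
  rw [← p.tsum_coe]
  exact ENNReal.tsum_le_tsum (Set.indicator_le_self s p)

theorem prob_ne_top {α : Type*} (p : PMF α) (s : Set α) : prob p s ≠ ∞ :=
  p.tsum_coe_indicator_ne_top s

theorem exists_mem_support_of_prob_ne_zero {α : Type*} {p : PMF α} {s : Set α}
    (h : prob p s ≠ 0) : ∃ x ∈ s, x ∈ p.support := by
  have h' : p.toOuterMeasure s ≠ 0 := by rwa [p.toOuterMeasure_apply]
  obtain ⟨x, hxp, hxs⟩ := Set.not_disjoint_iff.1 (mt (p.toOuterMeasure_apply_eq_zero_iff s).2 h')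
  exact ⟨x, hxs, hxp⟩

theorem sd_div_const_iff {F G : ℕ → ℝ≥0∞} {c : ℝ≥0∞} (hc₀ : c ≠ 0) (hc : c ≠ ∞) :
    SD (fun n => F n / c) (fun n => G n / c) ↔ SD F G := by
  simp only [SD, ← not_lt, ENNReal.div_lt_div_iff_left hc₀ hc]

theorem sd_tsum {ι : Type*} {F G : ι → ℕ → ℝ≥0∞} (hle : ∀ i n, G i n ≤ F i n)
    (hG : ∀ n, ∑' i, G i n ≠ ∞) {i : ι} (hi : SD (F i) (G i)) :
    SD (fun n => ∑' i, F i n) (fun n => ∑' i, G i n) := by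
  obtain ⟨n, hn⟩ := hi.2
  exact ⟨fun k => ENNReal.tsum_le_tsum fun j => hle j k,
    n, ENNReal.tsum_lt_tsum (hG n) (fun j => hle j n) hn⟩

/-- The joint probability, with the profile drawn from `ψ`, that the profile lies in `Y` and that
`φ` gives agent `a` a partner of rank at most `n`: the conditional CDF `cdfCond` before division
by the probability of `Y`. -/
noncomputable def jointCDF (ψ : PMF (Profile M W)) (Y : Set (Profile M W)) (φ : Mechanism M W)
    (a : M ⊕ W) (n : ℕ) : ℝ≥0∞ :=
  ∑' P, Y.indicator (fun P' => ψ P' * cdfAt P' (φ P') a n) P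

theorem jointCDF_empty (ψ : PMF (Profile M W)) (φ : Mechanism M W) (a : M ⊕ W) (n : ℕ) :
    jointCDF ψ ∅ φ a n = 0 := by
  simp [jointCDF]

theorem jointCDF_le_prob (ψ : PMF (Profile M W)) (Y : Set (Profile M W)) (φ : Mechanism M W)
    (a : M ⊕ W) (n : ℕ) : jointCDF ψ Y φ a n ≤ prob ψ Y :=
  ENNReal.tsum_le_tsum fun _ => Set.indicator_le_indicator <|
    mul_le_of_le_one_right' (prob_le_one _ _)

theorem jointCDF_ne_top (ψ : PMF (Profile M W)) (Y : Set (Profile M W)) (φ : Mechanism M W)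
    (a : M ⊕ W) (n : ℕ) : jointCDF ψ Y φ a n ≠ ∞ :=
  ne_top_of_le_ne_top (prob_ne_top ψ Y) (jointCDF_le_prob ψ Y φ a n)

theorem jointCDF_eq_tsum_fiber {τ : Type*} (g : Profile M W → τ) (ψ : PMF (Profile M W))
    (Y : Set (Profile M W)) (φ : Mechanism M W) (a : M ⊕ W) (n : ℕ) :
    jointCDF ψ Y φ a n = ∑' t, jointCDF ψ (g ⁻¹' {t} ∩ Y) φ a n := by
  unfold jointCDF
  rw [← ENNReal.tsum_fiberwise _ g]
  exact tsum_congr fun t => by rw [tsum_subtype, Set.indicator_indicator]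

theorem sd_jointCDF_of_fiber {τ : Type*} (g : Profile M W → τ) {ψ : PMF (Profile M W)}
    {Y : Set (Profile M W)} {φ φ' : Mechanism M W} {a : M ⊕ W} (hY : Y.Nonempty)
    (h : ∀ P ∈ Y, SD (jointCDF ψ (g ⁻¹' {g P} ∩ Y) φ' a) (jointCDF ψ (g ⁻¹' {g P} ∩ Y) φ a)) :
    SD (jointCDF ψ Y φ' a) (jointCDF ψ Y φ a) := by
  obtain ⟨P₀, hP₀⟩ := hY
  have hle (t : τ) (n : ℕ) :
      jointCDF ψ (g ⁻¹' {t} ∩ Y) φ a n ≤ jointCDF ψ (g ⁻¹' {t} ∩ Y) φ' a n := by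
    obtain hempty | ⟨P, rfl, hP⟩ := (g ⁻¹' {t} ∩ Y).eq_empty_or_nonempty
    · simp only [hempty, jointCDF_empty, le_refl]
    · exact (h P hP).1 n
  have hfin (n : ℕ) : ∑' t, jointCDF ψ (g ⁻¹' {t} ∩ Y) φ a n ≠ ∞ := by
    rw [← jointCDF_eq_tsum_fiber]
    exact jointCDF_ne_top ψ Y φ a n
  simpa only [← jointCDF_eq_tsum_fiber] using sd_tsum hle hfin (h P₀ hP₀)

theorem sd_cdfCond_iff {ψ : PMF (Profile M W)} {Y : Set (Profile M W)} (hY : prob ψ Y ≠ 0)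
    {φ φ' : Mechanism M W} {a : M ⊕ W} :
    SD (cdfCond ψ Y φ' a) (cdfCond ψ Y φ a) ↔ SD (jointCDF ψ Y φ' a) (jointCDF ψ Y φ a) :=
  sd_div_const_iff hY (prob_ne_top ψ Y)

theorem cdfExAnte_filter (ψ : PMF (Profile M W)) {Y : Set (Profile M W)}
    (hY : ∃ P ∈ Y, P ∈ ψ.support) (φ : Mechanism M W) (a : M ⊕ W) :
    cdfExAnte (ψ.filter Y hY) φ a = cdfCond ψ Y φ a := by
  funext n
  unfold cdfExAnte cdfCond
  rw [div_eq_mul_inv, ← ENNReal.tsum_mul_right]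
  refine tsum_congr fun P => ?_
  rw [PMF.filter_apply, Set.indicator_mul_left, mul_right_comm]
  rfl

/-- The preference relation of agent `a` in profile `P`, whose fibers partition the profiles by
what `a` knows in the interim.  The codomain is a sum type because men rank women and women rank
men. -/
def agentPref (a : M ⊕ W) (P : Profile M W) :
    (Option W ≃ Fin (Fintype.card W + 1)) ⊕ (Option M ≃ Fin (Fintype.card M + 1)) :=
  a.map P.mpref P.wpref

omit [DecidableEq M] [DecidableEq W] in
theorem agentPref_eq_iff {a : M ⊕ W} {P P' : Profile M W} :
    agentPref a P = agentPref a P' ↔ prefEq P P' a := by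
  cases a <;> simp only [agentPref, prefEq, Sum.map_inl, Sum.map_inr, Sum.inl.injEq, Sum.inr.injEq]

/-- The event that every member of the coalition `A'` agrees to deviate; conditioning the prior on
it turns an interim block into an ex-ante block. -/
def consentEvent (A' : Set (M ⊕ W)) (R : M ⊕ W → Set (Profile M W)) : Set (Profile M W) :=
  {P | ∀ a ∈ A', P ∈ R a}

omit [DecidableEq M] [DecidableEq W] in
theorem fiber_inter_consentEvent {A' : Set (M ⊕ W)} {R : M ⊕ W → Set (Profile M W)} {a : M ⊕ W}
    {Pt : Profile M W} (hR : ∀ P, prefEq P Pt a → P ∈ R a) :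
    agentPref a ⁻¹' {agentPref a Pt} ∩ consentEvent A' R = interimEvent A' R a Pt := by
  ext P
  change agentPref a P = agentPref a Pt ∧ (∀ a' ∈ A', P ∈ R a') ↔
    prefEq P Pt a ∧ ∀ a' ∈ A', a' ≠ a → P ∈ R a'
  rw [agentPref_eq_iff]
  refine and_congr_right fun hpref => ⟨fun h a' ha' _ => h a' ha', fun h a' ha' => ?_⟩
  obtain rfl | hne := eq_or_ne a' a
  · exact hR P hpref
  · exact h a' ha' hne

theorem BlocksInterim.exists_blocksExAnte {A' : Set (M ⊕ W)} {φ : Mechanism M W}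
    {ψ : PMF (Profile M W)} (h : BlocksInterim A' φ ψ) : ∃ ψ', BlocksExAnte A' φ ψ' := by
  obtain ⟨hne, φ', R, hR, hfeas, hdev, hpos⟩ := h
  have hprob : prob ψ (consentEvent A' R) ≠ 0 := hpos.ne'
  have hconsent := exists_mem_support_of_prob_ne_zero hprob
  refine ⟨ψ.filter _ hconsent, hne, φ', fun a ha => ?feasible, fun a ha => ?improves⟩
  case feasible => simp only [hfeas a ha, mul_one, PMF.tsum_coe]
  case improves =>
    rw [cdfExAnte_filter, cdfExAnte_filter, sd_cdfCond_iff hprob]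
    refine sd_jointCDF_of_fiber (agentPref a) (hconsent.imp fun _ => And.left) fun P hP => ?_
    obtain ⟨hYpos, hSD⟩ := (hdev a ha P).1 (hP a ha)
    rw [fiber_inter_consentEvent fun P' hpref => (hR a P' P hpref).2 (hP a ha)]
    exact (sd_cdfCond_iff hYpos.ne').1 hSD

/-- If a mechanism `φ` is ex-ante stable then it is interim stable;
moreover, if `φ` is ex-ante pairwise stable then it is interim pairwise stable. -/
theorem exAnteStable_imp_interimStable (φ : Mechanism M W) :
    (ExAnteStable φ → InterimStable φ) ∧
    (ExAntePairwiseStable φ → InterimPairwiseStable φ) := by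
  refine ⟨fun hφ ψ A' hblocks => ?_, fun hφ ψ A' hpair hblocks => ?_⟩
  · obtain ⟨ψ', hblocks'⟩ := hblocks.exists_blocksExAnte
    exact hφ ψ' A' hblocks'
  · obtain ⟨ψ', hblocks'⟩ := hblocks.exists_blocksExAnte
    exact hφ ψ' A' hpair hblocks'

end Unraveling
end

section
/- If a mechanism φ is interim stable, then φ is ex-post stable; moreover, if φ is interim pairwise stable, then φ is ex-post pairwise stable. -/
/-!
A point-mass prior on `P` leaves no uncertainty: conditioning on any event containing `P` returns
the ex-post rank distribution at `P`. If a coalition blocks ex-post at `P` through `φ'`, it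
therefore blocks in the interim at that prior, each member `a` accepting only the preferences `P_a`.
The deviation must keep the coalition closed at every profile and not just at `P`, so it
implements the lottery `φ' P` whatever is reported.
-/

open scoped ENNReal

namespace Unraveling

variable {M W : Type*} [Fintype M] [DecidableEq M] [Fintype W] [DecidableEq W]

theorem prob_eq_toOuterMeasure {α : Type*} (p : PMF α) (s : Set α) :
    prob p s = p.toOuterMeasure s :=
  (p.toOuterMeasure_apply s).symm

theorem prob_pure_of_mem {α : Type*} {x : α} {s : Set α} (hx : x ∈ s) :
    prob (PMF.pure x) s = 1 := by
  classical
  rw [prob_eq_toOuterMeasure, PMF.toOuterMeasure_pure_apply, if_pos hx]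

theorem prob_pure_pos_iff {α : Type*} {x : α} {s : Set α} :
    0 < prob (PMF.pure x) s ↔ x ∈ s := by
  classical
  rw [prob_eq_toOuterMeasure, PMF.toOuterMeasure_pure_apply]
  split_ifs with hx <;> simp [hx]

theorem cdfCond_pure_of_mem {P : Profile M W} {Y : Set (Profile M W)} (hP : P ∈ Y)
    (φ : Mechanism M W) (a : M ⊕ W) :
    cdfCond (PMF.pure P) Y φ a = cdfAt P (φ P) a := by
  funext n
  have hsum : ∑' Q, Y.indicator (fun Q' => PMF.pure P Q' * cdfAt Q' (φ Q') a n) Q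
      = cdfAt P (φ P) a n := by
    rw [tsum_eq_single P fun Q hQ => by simp [Set.indicator, hQ]]
    simp [hP]
  rw [cdfCond, hsum, prob_pure_of_mem hP, div_one]

section Preferences

omit [DecidableEq M] [DecidableEq W]

theorem prefEq_equivalence (a : M ⊕ W) :
    Equivalence fun P P' : Profile M W => prefEq P P' a := by
  cases a with
  | inl m => exact eq_equivalence.comap fun P : Profile M W => P.mpref m
  | inr w => exact eq_equivalence.comap fun P : Profile M W => P.wpref w

/-- The acceptance set `R_a = {P_a}` of an agent who agrees to deviate only when holding the
preferences `P_a`. As in `BlocksInterim`, a set of preferences of `a` is encoded as a set of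
profiles. -/
def acceptOnly (P : Profile M W) (a : M ⊕ W) : Set (Profile M W) :=
  {Q | prefEq Q P a}

theorem mem_interimEvent_acceptOnly_iff {A' : Set (M ⊕ W)} {P Q : Profile M W} {a : M ⊕ W} :
    P ∈ interimEvent A' (acceptOnly P) a Q ↔ Q ∈ acceptOnly P a :=
  ⟨fun h => (prefEq_equivalence a).symm h.1,
    fun h => ⟨(prefEq_equivalence a).symm h, fun a' _ _ => (prefEq_equivalence a').refl P⟩⟩

end Preferences

theorem BlocksExPost.blocksInterim_pure {A' : Set (M ⊕ W)} {φ : Mechanism M W} {P : Profile M W}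
    (h : BlocksExPost A' φ P) : BlocksInterim A' φ (PMF.pure P) := by
  obtain ⟨hne, φ', hclosed, hdom⟩ := h
  refine ⟨hne, fun _ => φ' P, acceptOnly P, ?depends_on_own, fun a ha _ => hclosed a ha,
    ?accepts_iff, ?accept_pos⟩
  case depends_on_own =>
    exact fun a Q Q' hQ =>
      ⟨(prefEq_equivalence a).trans ((prefEq_equivalence a).symm hQ),
        (prefEq_equivalence a).trans hQ⟩
  case accepts_iff =>
    intro a ha Q
    rw [prob_pure_pos_iff, mem_interimEvent_acceptOnly_iff, iff_self_and]
    intro hQ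
    have hP : P ∈ interimEvent A' (acceptOnly P) a Q :=
      mem_interimEvent_acceptOnly_iff.2 hQ
    rw [cdfCond_pure_of_mem hP, cdfCond_pure_of_mem hP]
    exact hdom a ha
  case accept_pos =>
    exact prob_pure_pos_iff.2 fun a _ => (prefEq_equivalence a).refl P

/-- If a mechanism `φ` is interim stable then it is ex-post stable;
moreover, if `φ` is interim pairwise stable then it is ex-post pairwise stable. -/
theorem interimStable_imp_exPostStable (φ : Mechanism M W) :
    (InterimStable φ → ExPostStable φ) ∧
    (InterimPairwiseStable φ → ExPostPairwiseStable φ) :=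
  ⟨fun h P A' hb => h (PMF.pure P) A' hb.blocksInterim_pure,
    fun h P A' hA hb => h (PMF.pure P) A' hA hb.blocksInterim_pure⟩

end Unraveling
end
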